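/- Let n, k be natural numbers. The k-regulous topology on ℝⁿ is Noetherian: every decreasing sequence F₀ ⊇ F₁ ⊇ F₂ ⊇ … of subsets of ℝⁿ, in which each F_i is an intersection of zero sets of k-regulous functions, is eventually constant. -/

import Mathlib

open MvPolynomial

/-- A function `f : ℝⁿ → ℝ` is `k`-regulous if it is of class `C^k` on all of `ℝⁿ` and
agrees with a rational function: there are polynomials `p`, `q` with `q ≠ 0` and
`q(x) * f(x) = p(x)` for every `x`. -/
def IsRegulous (n k : ℕ) (f : (Fin n → ℝ) → ℝ) : Prop :=
  ContDiff ℝ k f ∧ ∃ p q : MvPolynomial (Fin n) ℝ, q ≠ 0 ∧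
    ∀ x : Fin n → ℝ, eval x q * f x = eval x p

/-- A subset of `ℝⁿ` is `k`-regulously closed if it is an intersection of zero sets of
`k`-regulous functions. -/
def RegulouslyClosed (n k : ℕ) (F : Set (Fin n → ℝ)) : Prop :=
  ∃ E : Set ((Fin n → ℝ) → ℝ), (∀ g ∈ E, IsRegulous n k g) ∧
    F = ⋂ g ∈ E, {x : Fin n → ℝ | g x = 0}

/-!
A continuous function `f` with `q * f = p` is rational on every subset `S` of `ℝⁿ`, even if `q`
vanishes on `S`: expand `q` and `p` along lines `x + tv` of a fixed direction and compare the
coefficients of the lowest power of `t` whose coefficient in `q` does not vanish identically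
on `S`. Moreover, for a prime `P` of `ℝ[x₁, …, xₙ]` there is `h ∉ P` such that off `{h = 0}` every
nonempty Zariski-open subset of `Z(P)` is Euclidean-dense. This goes by induction on `n`: either
`Z(P)` is a cylinder over its projection, or off `{h = 0}` the last coordinate is a simple root of
a polynomial over the projection, and simple real roots persist under small perturbations of the
coefficients.

Now argue by Noetherian induction on closed sets `Z(I)`, where only a prime `I` matters. If some
`F i ∩ Z(I)` lies in a smaller closed set, the induction hypothesis applies to it. If none does,
then a regulous function vanishing on `F i`, written `p / q` on `Z(I)`, has `p ∈ I`; it vanishes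
on `{q ≠ 0}`, hence by density on `Z(I) \ {h = 0}`, so the `F i` all contain `Z(I) \ {h = 0}` and
can differ on `Z(I)` only inside `{h = 0}`.
-/

open Filter Topology

section CommonZeros

variable {R K X : Type*} [CommRing R] [CommRing K] (ev : X → R →+* K)

/-- The zero set of an ideal `I` of `R`, where each `x : X` is regarded as a `K`-valued point of `R`
through the evaluation `ev x`. -/
def commonZeros (I : Ideal R) : Set X :=
  {x | I ≤ RingHom.ker (ev x)}

variable {ev}

lemma map_eq_zero_of_mem_commonZeros {I : Ideal R} {x : X} (hx : x ∈ commonZeros ev I) {u : R}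
    (hu : u ∈ I) : ev x u = 0 :=
  hx hu

lemma commonZeros_bot : commonZeros ev ⊥ = Set.univ :=
  Set.eq_univ_of_forall fun x => (bot_le : ⊥ ≤ RingHom.ker (ev x))

lemma commonZeros_top [Nontrivial K] : commonZeros ev ⊤ = ∅ :=
  Set.eq_empty_of_forall_notMem fun x hx => RingHom.ker_ne_top (ev x) (top_le_iff.1 hx)

lemma commonZeros_sup_span_singleton (I : Ideal R) (u : R) :
    commonZeros ev (I ⊔ Ideal.span {u}) = commonZeros ev I ∩ {x | ev x u = 0} := by
  ext x
  simp only [commonZeros, Set.mem_ofPred_eq, Set.mem_inter_iff, sup_le_iff,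
    Ideal.span_singleton_le_iff_mem, RingHom.mem_ker]

lemma commonZeros_eq_union_of_mul_mem [NoZeroDivisors K] {I : Ideal R} {a b : R}
    (hab : a * b ∈ I) :
    commonZeros ev I =
      commonZeros ev (I ⊔ Ideal.span {a}) ∪ commonZeros ev (I ⊔ Ideal.span {b}) := by
  simp only [commonZeros_sup_span_singleton, ← Set.inter_union_distrib_left]
  refine (Set.inter_eq_left.2 fun x hx => ?_).symm
  have h : ev x a * ev x b = 0 := by rw [← map_mul, map_eq_zero_of_mem_commonZeros hx hab]
  exact mul_eq_zero.1 h

lemma eventuallyConst_inter_commonZeros_of_notMem {ι : Type*} [Preorder ι] {F : ι → Set X}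
    (hF : Antitone F) {I : Ideal R} {u : R} {i₀ : ι}
    (hu : ∀ x ∈ F i₀ ∩ commonZeros ev I, ev x u = 0)
    (hconst : EventuallyConst (fun i => F i ∩ commonZeros ev (I ⊔ Ideal.span {u})) atTop) :
    EventuallyConst (fun i => F i ∩ commonZeros ev I) atTop := by
  refine hconst.congr ?_
  filter_upwards [eventually_ge_atTop i₀] with i hi
  rw [commonZeros_sup_span_singleton, ← Set.inter_assoc]
  exact Set.inter_eq_left.2 fun x hx => hu x ⟨hF hi hx.1, hx.2⟩

lemma eventuallyConst_inter_commonZeros_of_diff_subset {ι : Type*} {l : Filter ι}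
    {F : ι → Set X} {I : Ideal R} {h : R}
    (hF : ∀ i, commonZeros ev I \ {x | ev x h = 0} ⊆ F i)
    (hconst : EventuallyConst (fun i => F i ∩ commonZeros ev (I ⊔ Ideal.span {h})) l) :
    EventuallyConst (fun i => F i ∩ commonZeros ev I) l := by
  convert hconst.comp (· ∪ commonZeros ev I \ {x | ev x h = 0}) using 2 with i
  ext x
  have := @hF i x
  simp only [commonZeros_sup_span_singleton, Function.comp_apply, Set.mem_inter_iff,
    Set.mem_union, Set.mem_sdiff, Set.mem_ofPred_eq] at this ⊢
  tauto

end CommonZeros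

section HereditarilyRational

variable {R K X : Type*} [CommRing R] [CommRing K]

/-- `f` is hereditarily rational if its restriction to every nonempty `S` is a quotient `p / q` of
elements of `R`. The relation is written `q * f = p`, and `q` is only required not to vanish
identically on `S`. -/
def IsHereditarilyRational (ev : X → R →+* K) (f : X → K) : Prop :=
  ∀ S : Set X, S.Nonempty →
    ∃ p q : R, (∃ x ∈ S, ev x q ≠ 0) ∧ ∀ x ∈ S, ev x q * f x = ev x p

variable [TopologicalSpace X]

/-- Off `{h = 0}`, every nonempty Zariski-open subset of the zero set of `I` is dense in it for the
topology of `X`. Nonemptiness is encoded as `q ∉ I`, so for a prime `I` without enough points the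
condition forces the zero set to lie in `{h = 0}`. -/
def ZariskiOpensDenseOff (ev : X → R →+* K) (I : Ideal R) (h : R) : Prop :=
  ∀ q ∉ I, commonZeros ev I \ {x | ev x h = 0} ⊆ closure (commonZeros ev I \ {x | ev x q = 0})

/-- On the zero set of every prime ideal, density of Zariski-open subsets holds generically. This
plays the role of the density of Zariski-open sets near regular points of a real variety. -/
def HasGenericDensity (ev : X → R →+* K) : Prop :=
  ∀ P : Ideal R, P.IsPrime → ∃ h ∉ P, ZariskiOpensDenseOff ev P h

variable [NoZeroDivisors K] [TopologicalSpace K] [T1Space K] {ev : X → R →+* K}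

lemma IsHereditarilyRational.commonZeros_diff_subset {f : X → K}
    (hf : IsHereditarilyRational ev f) (hcont : Continuous f) {I : Ideal R} {h : R}
    (hdense : ZariskiOpensDenseOff ev I h)
    (hI : ∀ u, (∀ x ∈ commonZeros ev I, f x = 0 → ev x u = 0) → u ∈ I) :
    commonZeros ev I \ {x | ev x h = 0} ⊆ {x | f x = 0} := by
  rintro x ⟨hx, hxh⟩
  obtain ⟨p, q, ⟨z, hz, hzq⟩, hpq⟩ := hf (commonZeros ev I) ⟨x, hx⟩
  have hq : q ∉ I := fun hq => hzq (map_eq_zero_of_mem_commonZeros hz hq)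
  have hp : p ∈ I := hI p fun y hy hfy => by rw [← hpq y hy, hfy, mul_zero]
  have hzero : commonZeros ev I \ {y | ev y q = 0} ⊆ {y | f y = 0} := by
    rintro y ⟨hy, hyq⟩
    have hmul : ev y q * f y = 0 := (hpq y hy).trans (map_eq_zero_of_mem_commonZeros hy hp)
    exact (mul_eq_zero.1 hmul).resolve_left hyq
  exact closure_minimal hzero (isClosed_singleton.preimage hcont) (hdense q hq ⟨hx, hxh⟩)

theorem eventuallyConst_of_antitone_of_hereditarilyRational [Nontrivial K] [IsNoetherianRing R]
    (hev : HasGenericDensity ev) {ι : Type*} [Preorder ι] {F : ι → Set X} (hF : Antitone F)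
    (hzero : ∀ i, ∃ E : Set (X → K),
      (∀ f ∈ E, Continuous f ∧ IsHereditarilyRational ev f) ∧ F i = ⋂ f ∈ E, {x | f x = 0}) :
    EventuallyConst F atTop := by
  suffices H : ∀ I : Ideal R, EventuallyConst (fun i => F i ∩ commonZeros ev I) atTop by
    simpa only [commonZeros_bot, Set.inter_univ] using H ⊥
  intro I
  induction I using WellFoundedGT.induction with | _ I ih =>
  have ih' : ∀ u ∉ I, EventuallyConst
      (fun i => F i ∩ commonZeros ev (I ⊔ Ideal.span {u})) atTop := fun u hu =>
    ih _ (left_lt_sup.2 (by rwa [Ideal.span_singleton_le_iff_mem]))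
  by_cases hprime : I.IsPrime
  · by_cases hvanish : ∃ i, ∃ u ∉ I, ∀ x ∈ F i ∩ commonZeros ev I, ev x u = 0
    · obtain ⟨i, u, hu, hux⟩ := hvanish
      exact eventuallyConst_inter_commonZeros_of_notMem hF hux (ih' u hu)
    · push Not at hvanish
      obtain ⟨h, hh, hdense⟩ := hev I hprime
      refine eventuallyConst_inter_commonZeros_of_diff_subset (fun i => ?_) (ih' h hh)
      obtain ⟨E, hE, hFE⟩ := hzero i
      rw [hFE]
      refine Set.subset_iInter₂ fun f hf =>
        (hE f hf).2.commonZeros_diff_subset (hE f hf).1 hdense fun u hu => ?_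
      by_contra huI
      obtain ⟨x, ⟨hxF, hxI⟩, hxu⟩ := hvanish i u huI
      exact hxu (hu x hxI (Set.mem_iInter₂.1 (hFE ▸ hxF) f hf))
  · rcases Ideal.not_isPrime_iff.1 hprime with rfl | ⟨a, ha, b, hb, hab⟩
    · simpa only [commonZeros_top, Set.inter_empty] using EventuallyConst.const ∅
    · simp only [commonZeros_eq_union_of_mul_mem hab, Set.inter_union_distrib_left]
      exact (ih' a ha).comp₂ (· ∪ ·) (ih' b hb)

end HereditarilyRational

section MinimalRelation

variable {R : Type*} [CommRing R]

/-- `g` has least degree among the elements of `P` that are not already in the extension of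
`P ∩ R`. It plays the role of the minimal polynomial of the class of the variable over the fraction
field of `R ⧸ P ∩ R`, without dividing by the leading coefficient. -/
structure IsMinimalRelation (P : Ideal (Polynomial R)) (g : Polynomial R) : Prop where
  mem : g ∈ P
  notMem_map_C : g ∉ (P.under R).map Polynomial.C
  mem_map_C_of_natDegree_lt : ∀ u ∈ P, u.natDegree < g.natDegree →
    u ∈ (P.under R).map Polynomial.C

lemma exists_isMinimalRelation {P : Ideal (Polynomial R)}
    (hP : ¬ P ≤ (P.under R).map Polynomial.C) : ∃ g, IsMinimalRelation P g := by
  obtain ⟨g, ⟨hg, hg'⟩, hmin⟩ := exists_minimalFor_of_wellFoundedLT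
    (fun g : Polynomial R => g ∈ P ∧ g ∉ (P.under R).map Polynomial.C) Polynomial.natDegree
    (SetLike.not_le_iff_exists.1 hP)
  exact ⟨g, hg, hg', fun u hu hlt => by_contra fun hu' => (hmin ⟨hu, hu'⟩ hlt.le).not_gt hlt⟩

namespace IsMinimalRelation

variable {P : Ideal (Polynomial R)} {g : Polynomial R}

lemma natDegree_pos (hg : IsMinimalRelation P g) : 0 < g.natDegree := by
  refine Nat.pos_of_ne_zero fun hdeg => hg.notMem_map_C ?_
  have hmem := hg.mem
  rw [Polynomial.eq_C_of_natDegree_eq_zero hdeg] at hmem ⊢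
  exact Ideal.mem_map_of_mem _ hmem

lemma leadingCoeff_notMem (hg : IsMinimalRelation P g) : g.leadingCoeff ∉ P.under R := by
  intro hlc
  have hmonomial : Polynomial.C g.leadingCoeff * Polynomial.X ^ g.natDegree ∈
      (P.under R).map Polynomial.C := Ideal.mul_mem_right _ _ (Ideal.mem_map_of_mem _ hlc)
  have herase : g.eraseLead ∈ (P.under R).map Polynomial.C := by
    refine hg.mem_map_C_of_natDegree_lt _ ?_ ?_
    · rw [← Polynomial.self_sub_C_mul_X_pow]
      exact P.sub_mem hg.mem (Ideal.map_comap_le hmonomial)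
    · have := g.eraseLead_natDegree_le
      have := hg.natDegree_pos
      omega
  apply hg.notMem_map_C
  rw [← g.eraseLead_add_C_mul_X_pow]
  exact Ideal.add_mem _ herase hmonomial

lemma derivative_notMem [Algebra ℚ R] (hg : IsMinimalRelation P g) :
    Polynomial.derivative g ∉ P := by
  intro hder
  have hdeg : g.natDegree ≠ 0 := hg.natDegree_pos.ne'
  have hcoeff := Ideal.mem_map_C_iff.1 (hg.mem_map_C_of_natDegree_lt _ hder
    (Polynomial.natDegree_derivative_lt hdeg)) (g.natDegree - 1)
  rw [Polynomial.coeff_derivative, ← Nat.cast_add_one, Nat.sub_one_add_one hdeg,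
    Polynomial.coeff_natDegree] at hcoeff
  have hunit : IsUnit (g.natDegree : R) := by
    rw [← map_natCast (algebraMap ℚ R)]
    exact (IsUnit.mk0 _ (Nat.cast_ne_zero.2 hdeg)).map _
  exact hg.leadingCoeff_notMem ((Ideal.mul_unit_mem_iff_mem _ hunit).1 hcoeff)

/- Pseudo-division by `g`: reducing `u ∈ P` modulo `g` costs only powers of the leading coefficient
of `g`, which `φ` does not kill. -/
lemma le_ker {S : Type*} [CommRing S] [NoZeroDivisors S] (hg : IsMinimalRelation P g)
    {φ : Polynomial R →+* S} (hφ : (P.under R).map Polynomial.C ≤ RingHom.ker φ)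
    (hlc : φ (Polynomial.C g.leadingCoeff) ≠ 0) (hφg : φ g = 0) : P ≤ RingHom.ker φ := by
  intro u hu
  induction hd : u.natDegree using Nat.strong_induction_on generalizing u with | _ d ih =>
  rcases lt_or_ge u.natDegree g.natDegree with hlt | hle
  · exact hφ (hg.mem_map_C_of_natDegree_lt u hu hlt)
  · have hcancel : φ (g.cancelLeads u) = 0 := by
      refine ih _ ?_ (P.sub_mem (P.mul_mem_left _ hu) (P.mul_mem_left _ hg.mem)) rfl
      exact hd ▸ Polynomial.natDegree_cancelLeads_lt_of_natDegree_le_natDegree hle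
        (hg.natDegree_pos.trans_le hle)
    rw [Polynomial.cancelLeads, Nat.sub_eq_zero_of_le hle, pow_zero, mul_one, map_sub, map_mul,
      map_mul, hφg, mul_zero, sub_zero] at hcancel
    exact (mul_eq_zero.1 hcancel).resolve_left hlc

lemma isAlgebraic_mk_X (hg : IsMinimalRelation P g) :
    IsAlgebraic (R ⧸ P.under R) (Ideal.Quotient.mk P Polynomial.X) := by
  refine ⟨g.map (Ideal.Quotient.mk (P.under R)), fun h0 => hg.notMem_map_C ?_, ?_⟩
  · refine Ideal.mem_map_C_iff.2 fun i => ?_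
    rw [← Ideal.Quotient.eq_zero_iff_mem, ← Polynomial.coeff_map, h0, Polynomial.coeff_zero]
  · have hcomp : (algebraMap (R ⧸ P.under R) (Polynomial R ⧸ P)).comp
        (Ideal.Quotient.mk (P.under R)) = (Ideal.Quotient.mk P).comp Polynomial.C := rfl
    rw [Polynomial.aeval_def, Polynomial.eval₂_map, hcomp, ← Polynomial.hom_eval₂,
      Polynomial.eval₂_C_X]
    exact Ideal.Quotient.eq_zero_iff_mem.2 hg.mem

lemma isAlgebraic_mk [P.IsPrime] (hg : IsMinimalRelation P g) (w : Polynomial R) :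
    IsAlgebraic (R ⧸ P.under R) (Ideal.Quotient.mk P w) := by
  induction w using Polynomial.induction_on' with
  | add a b ha hb => exact map_add (Ideal.Quotient.mk P) a b ▸ ha.add hb
  | monomial n a =>
    rw [← Polynomial.C_mul_X_pow_eq_monomial, map_mul, map_pow]
    exact (isAlgebraic_algebraMap (Ideal.Quotient.mk (P.under R) a)).mul (hg.isAlgebraic_mk_X.pow n)

lemma exists_C_mem_sup_span_singleton [P.IsPrime] (hg : IsMinimalRelation P g)
    {q : Polynomial R} (hq : q ∉ P) :
    ∃ r ∉ P.under R, Polynomial.C r ∈ P ⊔ Ideal.span {q} := by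
  obtain ⟨z, hz, hdvd⟩ := (hg.isAlgebraic_mk q).exists_nonzero_dvd
    (mem_nonZeroDivisors_of_ne_zero (Ideal.Quotient.eq_zero_iff_mem.not.2 hq))
  obtain ⟨r, rfl⟩ := Ideal.Quotient.mk_surjective z
  refine ⟨r, Ideal.Quotient.eq_zero_iff_mem.not.1 hz, ?_⟩
  obtain ⟨s, hs⟩ := hdvd
  obtain ⟨s, rfl⟩ := Ideal.Quotient.mk_surjective s
  have hs' : Ideal.Quotient.mk P (Polynomial.C r) = Ideal.Quotient.mk P (q * s) :=
    hs.trans (map_mul _ _ _).symm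
  rw [← sub_add_cancel (Polynomial.C r) (q * s)]
  exact Ideal.add_mem _ (Ideal.mem_sup_left (Ideal.Quotient.eq.1 hs'))
    (Ideal.mem_sup_right (Ideal.mul_mem_right _ _ (Ideal.mem_span_singleton_self q)))

end IsMinimalRelation

end MinimalRelation

section SimpleRoots

lemma frequently_neg_of_hasDerivAt {f : ℝ → ℝ} {d b : ℝ} (hf : HasDerivAt f d b) (hd : d ≠ 0)
    (hb : f b = 0) : ∃ᶠ t in 𝓝 b, f t < 0 := by
  intro hnonneg
  refine hd (IsLocalMin.hasDerivAt_eq_zero ?_ hf)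
  filter_upwards [hnonneg] with t ht
  rw [hb]
  exact not_lt.1 ht

lemma eventually_exists_eq_zero_of_hasDerivAt {X : Type*} [TopologicalSpace X]
    {G : X → ℝ → ℝ} (hG : Continuous fun z : X × ℝ => G z.1 z.2) {a : X} {b d : ℝ}
    (hb : G a b = 0) (hd : HasDerivAt (G a) d b) (hd0 : d ≠ 0) {V : Set ℝ} (hV : V ∈ 𝓝 b) :
    ∀ᶠ x in 𝓝 a, ∃ t ∈ V, G x t = 0 := by
  obtain ⟨ε, hε, hball⟩ := Metric.mem_nhds_iff.1 hV
  have hnhds : ∀ᶠ t in 𝓝 b, t ∈ Metric.ball b ε := Metric.ball_mem_nhds b hε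
  obtain ⟨s, hs, hsb⟩ := ((frequently_neg_of_hasDerivAt hd hd0 hb).and_eventually hnhds).exists
  obtain ⟨t, ht, htb⟩ :=
    ((frequently_neg_of_hasDerivAt hd.neg (neg_ne_zero.2 hd0) (by simp [hb])).and_eventually
      hnhds).exists
  have hsec (u : ℝ) : Continuous fun x => G x u := hG.comp (by fun_prop : Continuous (·, u))
  filter_upwards [(hsec s).continuousAt.eventually_lt continuousAt_const hs,
    continuousAt_const.eventually_lt (hsec t).continuousAt (neg_neg_iff_pos.1 ht)] with x hxs hxt
  have hline : Continuous (G x) := hG.comp (by fun_prop : Continuous (x, ·))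
  obtain ⟨u, hu, hu0⟩ :=
    intermediate_value_uIcc hline.continuousOn (Set.mem_uIcc_of_le hxs.le hxt.le)
  refine ⟨u, hball ((convex_ball b ε).segment_subset hsb htb ?_), hu0⟩
  rwa [segment_eq_uIcc]

end SimpleRoots

section PolynomialEval

variable {R K X : Type*} [CommRing R] [CommRing K]

/-- Points of `R[X]`: a point of `R` together with a value of the variable. -/
noncomputable def polynomialEval (ev : X → R →+* K) (z : X × K) : Polynomial R →+* K :=
  Polynomial.eval₂RingHom (ev z.1) z.2

variable {ev : X → R →+* K}

lemma polynomialEval_eq_eval_map (z : X × K) (w : Polynomial R) :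
    polynomialEval ev z w = (w.map (ev z.1)).eval z.2 :=
  (Polynomial.eval_map ..).symm

@[simp]
lemma polynomialEval_C (z : X × K) (r : R) : polynomialEval ev z (Polynomial.C r) = ev z.1 r :=
  Polynomial.eval₂_C ..

lemma continuous_polynomialEval [TopologicalSpace X] [TopologicalSpace K] [IsTopologicalSemiring K]
    (hev : ∀ r, Continuous (ev · r)) (w : Polynomial R) :
    Continuous (polynomialEval ev · w) := by
  simp only [polynomialEval, Polynomial.coe_eval₂RingHom, Polynomial.eval₂_eq_sum_range]
  exact continuous_finsetSum _ fun i _ =>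
    ((hev _).comp continuous_fst).mul (continuous_snd.pow i)

lemma hasDerivAt_polynomialEval {𝕜 : Type*} [NontriviallyNormedField 𝕜] {ev : X → R →+* 𝕜}
    (w : Polynomial R) (x : X) (t : 𝕜) :
    HasDerivAt (fun s => polynomialEval ev (x, s) w)
      (polynomialEval ev (x, t) (Polynomial.derivative w)) t := by
  simp only [polynomialEval_eq_eval_map, ← Polynomial.derivative_map]
  exact (w.map (ev x)).hasDerivAt t

lemma map_C_le_ker_polynomialEval {I : Ideal R} {z : X × K} (hz : z.1 ∈ commonZeros ev I) :
    I.map Polynomial.C ≤ RingHom.ker (polynomialEval ev z) := by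
  refine Ideal.map_le_iff_le_comap.2 fun r hr => ?_
  rw [Ideal.mem_comap, RingHom.mem_ker, polynomialEval_C]
  exact hz hr

lemma fst_mem_commonZeros_under {P : Ideal (Polynomial R)} {z : X × K}
    (hz : z ∈ commonZeros (polynomialEval ev) P) : z.1 ∈ commonZeros ev (P.under R) := by
  intro r hr
  rw [RingHom.mem_ker, ← polynomialEval_C z]
  exact hz hr

variable [TopologicalSpace X]

lemma ZariskiOpensDenseOff.polynomialEval_of_le_map_C [IsDomain K] [TopologicalSpace K] [T1Space K]
    [∀ t : K, (𝓝[≠] t).NeBot] {P : Ideal (Polynomial R)} (hP : P ≤ (P.under R).map Polynomial.C)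
    {h : R} (hdense : ZariskiOpensDenseOff ev (P.under R) h) :
    ZariskiOpensDenseOff (polynomialEval ev) P (Polynomial.C h) := by
  rintro q hq ⟨a, b⟩ ⟨hab, hne⟩
  obtain ⟨j, hj⟩ : ∃ j, q.coeff j ∉ P.under R := by
    by_contra! hcoeff
    exact hq (Ideal.map_comap_le (Ideal.mem_map_C_iff.2 hcoeff))
  have hfiber : ∀ x ∈ commonZeros ev (P.under R) \ {x | ev x (q.coeff j) = 0},
      (x, b) ∈ closure (commonZeros (polynomialEval ev) P \ {z | polynomialEval ev z q = 0}) := by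
    rintro x ⟨hx, hxj⟩
    have hq0 : q.map (ev x) ≠ 0 := fun h0 => hxj <| by
      rw [Set.mem_ofPred_eq, ← Polynomial.coeff_map, h0, Polynomial.coeff_zero]
    refine map_mem_closure (f := (x, ·)) (by fun_prop)
      (dense_univ.sdiff_finite (Polynomial.finite_setOfPred_isRoot hq0) b) ?_
    rintro t ⟨-, ht⟩
    refine ⟨hP.trans (map_C_le_ker_polynomialEval hx), fun h0 => ht ?_⟩
    rw [Set.mem_ofPred_eq, Polynomial.IsRoot.def, ← polynomialEval_eq_eval_map (x, t)]
    exact h0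
  have ha : a ∈ commonZeros ev (P.under R) \ {x | ev x h = 0} :=
    ⟨fst_mem_commonZeros_under hab, fun h0 => hne (by simpa using h0)⟩
  simpa only [closure_closure] using
    map_mem_closure (f := (·, b)) (by fun_prop) (hdense _ hj ha) hfiber

lemma ZariskiOpensDenseOff.polynomialEval_of_isMinimalRelation {ev : X → R →+* ℝ}
    (hev : ∀ r, Continuous (ev · r)) {P : Ideal (Polynomial R)} [P.IsPrime] {g : Polynomial R}
    (hg : IsMinimalRelation P g) {h : R} (hdense : ZariskiOpensDenseOff ev (P.under R) h) :
    ZariskiOpensDenseOff (polynomialEval ev) P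
      (Polynomial.C (h * g.leadingCoeff) * Polynomial.derivative g) := by
  rintro q hq ⟨a, b⟩ ⟨hab, hne⟩
  obtain ⟨⟨hah, halc⟩, hder⟩ : (ev a h ≠ 0 ∧ ev a g.leadingCoeff ≠ 0) ∧
      polynomialEval ev (a, b) (Polynomial.derivative g) ≠ 0 := by
    simpa only [Set.mem_ofPred_eq, map_mul, polynomialEval_C, mul_eq_zero, not_or] using hne
  obtain ⟨r, hr, hrq⟩ := hg.exists_C_mem_sup_span_singleton hq
  refine mem_closure_iff_nhds.2 fun W hW => ?_
  obtain ⟨U, hU, V, hV, hUV⟩ := mem_nhds_prod_iff.1 hW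
  have hbase : ∃ᶠ x in 𝓝 a, x ∈ commonZeros ev (P.under R) \ {x | ev x r = 0} :=
    mem_closure_iff_frequently.1 (hdense r hr ⟨fst_mem_commonZeros_under hab, hah⟩)
  have hroot : ∀ᶠ x in 𝓝 a, ∃ t ∈ V, polynomialEval ev (x, t) g = 0 :=
    eventually_exists_eq_zero_of_hasDerivAt (G := fun x t => polynomialEval ev (x, t) g)
      (continuous_polynomialEval hev g) (map_eq_zero_of_mem_commonZeros hab hg.mem)
      (hasDerivAt_polynomialEval g a b) hder hV
  have hlc : ∀ᶠ x in 𝓝 a, ev x g.leadingCoeff ≠ 0 := (hev _).continuousAt.eventually_ne halc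
  obtain ⟨x, ⟨hxP, hxr⟩, ⟨t, ht, hxt⟩, hxlc, hxU⟩ :=
    (hbase.and_eventually (hroot.and (hlc.and hU))).exists
  have hzero : (x, t) ∈ commonZeros (polynomialEval ev) P :=
    hg.le_ker (map_C_le_ker_polynomialEval hxP) (by rwa [polynomialEval_C]) hxt
  refine ⟨(x, t), hUV ⟨hxU, ht⟩, hzero, fun hxq => hxr ?_⟩
  have hsup : P ⊔ Ideal.span {q} ≤ RingHom.ker (polynomialEval ev (x, t)) :=
    sup_le hzero ((Ideal.span_singleton_le_iff_mem _).2 hxq)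
  exact (polynomialEval_C (x, t) r).symm.trans (hsup hrq)

theorem HasGenericDensity.polynomialEval [Algebra ℚ R] {ev : X → R →+* ℝ}
    (hev : ∀ r, Continuous (ev · r)) (hdense : HasGenericDensity ev) :
    HasGenericDensity (polynomialEval ev) := by
  intro P hP
  obtain ⟨h, hh, hdense⟩ := hdense (P.under R) inferInstance
  by_cases hle : P ≤ (P.under R).map Polynomial.C
  · exact ⟨Polynomial.C h, hh, hdense.polynomialEval_of_le_map_C hle⟩
  · obtain ⟨g, hg⟩ := exists_isMinimalRelation hle
    refine ⟨_, ?_, hdense.polynomialEval_of_isMinimalRelation hev hg⟩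
    refine hP.mul_notMem (fun hmem => ?_) hg.derivative_notMem
    exact (inferInstance : (P.under R).IsPrime).mul_notMem hh hg.leadingCoeff_notMem hmem

end PolynomialEval

section Density

variable {R S K X Y : Type*} [CommRing R] [CommRing S] [CommRing K] [TopologicalSpace X]
  [TopologicalSpace Y]

lemma HasGenericDensity.of_injective {ev : X → R →+* K} (hev : ∀ x, Function.Injective (ev x)) :
    HasGenericDensity ev := by
  refine fun P hP => ⟨1, hP.one_notMem, fun q hq x hx => subset_closure ⟨hx.1, fun h0 => hq ?_⟩⟩
  rw [(map_eq_zero_iff _ (hev x)).1 h0]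
  exact P.zero_mem

lemma HasGenericDensity.of_equiv {ev : X → R →+* K} {ev' : Y → S →+* K}
    (hev : HasGenericDensity ev) (e : S ≃+* R) (φ : Y ≃ₜ X)
    (he : ∀ y s, ev (φ y) (e s) = ev' y s) : HasGenericDensity ev' := by
  intro P hP
  have hzeros : φ ⁻¹' commonZeros ev (P.comap e.symm) = commonZeros ev' P := by
    ext y
    refine ⟨fun hy s hs => ?_, fun hy r hr => ?_⟩
    · rw [RingHom.mem_ker, ← he]
      exact hy (by simpa using hs)
    · obtain ⟨s, rfl⟩ := e.surjective r
      rw [RingHom.mem_ker, he]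
      exact hy (by simpa using hr)
  have hopen (s : S) : φ ⁻¹' (commonZeros ev (P.comap e.symm) \ {x | ev x (e s) = 0}) =
      commonZeros ev' P \ {y | ev' y s = 0} := by
    rw [Set.preimage_sdiff, hzeros]
    simp only [Set.preimage_ofPred_eq, he]
  obtain ⟨h, hh, hdense⟩ := hev (P.comap e.symm) inferInstance
  obtain ⟨h, rfl⟩ := e.surjective h
  refine ⟨h, by simpa using hh, fun q hq => ?_⟩
  rw [← hopen, ← hopen, ← φ.preimage_closure]
  exact Set.preimage_mono (hdense (e q) (by simpa using hq))

/-- Splitting off the coordinate `none`, as a homeomorphism. -/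
def optionArrowHomeomorph (σ K : Type*) [TopologicalSpace K] :
    (Option σ → K) ≃ₜ (σ → K) × K where
  toFun x := (x ∘ some, x none)
  invFun z o := o.elim z.2 z.1
  left_inv x := by ext (_ | _) <;> rfl
  right_inv _ := rfl
  continuous_toFun := by fun_prop
  continuous_invFun := continuous_pi (by rintro (_ | _) <;> dsimp <;> fun_prop)

lemma polynomialEval_optionEquivLeft {σ : Type*} (x : Option σ → K)
    (p : MvPolynomial (Option σ) K) :
    polynomialEval eval (x ∘ some, x none) (optionEquivLeft K σ p) = eval x p := by
  induction p using MvPolynomial.induction_on with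
  | C a => simp [optionEquivLeft_C]
  | add p q hp hq => simp only [map_add, hp, hq]
  | mul_X p i hp =>
    rw [map_mul, map_mul, hp, map_mul]
    congr 1
    cases i <;> simp [polynomialEval]

theorem hasGenericDensity_eval (σ : Type*) [Finite σ] :
    HasGenericDensity (eval : (σ → ℝ) → MvPolynomial σ ℝ →+* ℝ) := by
  induction σ using Finite.induction_empty_option with
  | of_equiv e ih =>
    refine ih.of_equiv (renameEquiv ℝ e.symm).toRingEquiv
      (Homeomorph.piCongrLeft (Y := fun _ => ℝ) e).symm fun x p => ?_
    change eval (x ∘ e) (rename e.symm p) = eval x p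
    rw [eval_rename, Function.comp_assoc, e.self_comp_symm, Function.comp_id]
  | h_empty =>
    refine .of_injective fun x p q hpq => MvPolynomial.funext fun y => ?_
    rwa [Subsingleton.elim y x]
  | h_option ih =>
    exact (ih.polynomialEval fun p => p.continuous_eval).of_equiv
      (optionEquivLeft ℝ _).toRingEquiv (optionArrowHomeomorph _ ℝ) polynomialEval_optionEquivLeft

end Density

section Rational

lemma coeff_mul_apply_zero_of_eval_mul_eq {K : Type*} [CommRing K] [IsDomain K]
    [TopologicalSpace K] [IsTopologicalSemiring K] [T2Space K] [(𝓝[≠] (0 : K)).NeBot]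
    {A B : Polynomial K} {f : K → K} (hf : Continuous f)
    (hAB : ∀ t, A.eval t * f t = B.eval t) {m : ℕ} (hA : ∀ j < m, A.coeff j = 0) :
    A.coeff m * f 0 = B.coeff m := by
  induction m generalizing A B with
  | zero => simpa only [Polynomial.coeff_zero_eq_eval_zero] using hAB 0
  | succ m ih =>
    have hA0 : A.coeff 0 = 0 := hA 0 m.succ_pos
    have hB0 : B.coeff 0 = 0 := by
      rw [Polynomial.coeff_zero_eq_eval_zero, ← hAB, ← Polynomial.coeff_zero_eq_eval_zero, hA0,
        zero_mul]
    obtain ⟨A, rfl⟩ := Polynomial.X_dvd_iff.2 hA0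
    obtain ⟨B, rfl⟩ := Polynomial.X_dvd_iff.2 hB0
    have hAB' : (fun t => A.eval t * f t) = fun t => B.eval t := by
      refine Continuous.ext_on (dense_compl_singleton (0 : K)) (by fun_prop) (by fun_prop) ?_
      intro t ht
      refine mul_left_cancel₀ (Set.mem_compl_singleton_iff.1 ht) ?_
      simpa only [Polynomial.eval_mul, Polynomial.eval_X, mul_assoc] using hAB t
    simp only [Polynomial.coeff_X_mul]
    refine ih (congrFun hAB') fun j hj => ?_
    simpa only [Polynomial.coeff_X_mul] using hA (j + 1) (Nat.succ_lt_succ hj)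

variable {σ K : Type*} [CommRing K]

/-- The expansion of `p (x + t v)` as a polynomial in `t`, with coefficients polynomials in `x`. -/
noncomputable def lineExpansion (v : σ → K) : MvPolynomial σ K →+* Polynomial (MvPolynomial σ K) :=
  eval₂Hom (Polynomial.C.comp C) fun i => Polynomial.C (X i) + Polynomial.C (C (v i)) * Polynomial.X

lemma eval_map_lineExpansion (v x : σ → K) (t : K) (p : MvPolynomial σ K) :
    ((lineExpansion v p).map (eval x)).eval t = eval (x + t • v) p := by
  have h : ((Polynomial.evalRingHom t).comp (Polynomial.mapRingHom (eval x))).comp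
      (lineExpansion v) = eval (x + t • v) := by
    ext <;> simp [lineExpansion, mul_comm t]
  exact congrArg (· p) h

lemma exists_coeff_lineExpansion_ne_zero {q : MvPolynomial σ K} {x y : σ → K} (hq : eval y q ≠ 0) :
    ∃ m, eval x ((lineExpansion (y - x) q).coeff m) ≠ 0 := by
  by_contra! hcoeff
  have hzero : (lineExpansion (y - x) q).map (eval x) = 0 := by
    ext m
    rw [Polynomial.coeff_map, hcoeff, Polynomial.coeff_zero]
  apply hq
  rw [← add_sub_cancel x y, ← one_smul K (y - x), ← eval_map_lineExpansion, hzero,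
    Polynomial.eval_zero]

theorem isHereditarilyRational_of_continuous [IsDomain K] [TopologicalSpace K]
    [IsTopologicalSemiring K] [T2Space K] [(𝓝[≠] (0 : K)).NeBot] {f : (σ → K) → K}
    (hf : Continuous f) {p q : MvPolynomial σ K} (hq : q ≠ 0)
    (hpq : ∀ x, eval x q * f x = eval x p) : IsHereditarilyRational eval f := by
  classical
  rintro S ⟨x₀, hx₀⟩
  have : Infinite K := Set.infinite_univ_iff.1 (infinite_of_mem_nhds (0 : K) univ_mem)
  obtain ⟨y, hy⟩ : ∃ y, eval y q ≠ 0 := by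
    by_contra! hzero
    exact hq (MvPolynomial.funext fun y => by rw [hzero, map_zero])
  have hex : ∃ m, ∃ x ∈ S, eval x ((lineExpansion (y - x₀) q).coeff m) ≠ 0 :=
    (exists_coeff_lineExpansion_ne_zero hy).imp fun _ hm => ⟨x₀, hx₀, hm⟩
  refine ⟨(lineExpansion (y - x₀) p).coeff (Nat.find hex),
    (lineExpansion (y - x₀) q).coeff (Nat.find hex), Nat.find_spec hex, fun x hx => ?_⟩
  have hline := coeff_mul_apply_zero_of_eval_mul_eq
    (A := (lineExpansion (y - x₀) q).map (eval x)) (B := (lineExpansion (y - x₀) p).map (eval x))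
    (f := fun t => f (x + t • (y - x₀))) (hf.comp (by fun_prop))
    (fun t => by simp only [eval_map_lineExpansion, hpq]) fun j hj => by
      rw [Polynomial.coeff_map]
      by_contra hne
      exact Nat.find_min hex hj ⟨x, hx, hne⟩
  simpa only [Polynomial.coeff_map, zero_smul, add_zero] using hline

end Rational

/-- **Regulous functions, Corollaire `topregnoeth`**: the `k`-regulous topology on `ℝⁿ` is
Noetherian: every decreasing sequence of `k`-regulously closed subsets of `ℝⁿ` is
eventually constant. -/
theorem regulous_topology_noetherian (n k : ℕ) (F : ℕ → Set (Fin n → ℝ))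
    (hreg : ∀ i : ℕ, RegulouslyClosed n k (F i))
    (hdec : ∀ i : ℕ, F (i + 1) ⊆ F i) :
    ∃ N : ℕ, ∀ i : ℕ, N ≤ i → F i = F N := by
  have hanti : Antitone F := antitone_nat_of_succ_le hdec
  have hzero : ∀ i, ∃ E : Set ((Fin n → ℝ) → ℝ),
      (∀ g ∈ E, Continuous g ∧ IsHereditarilyRational eval g) ∧ F i = ⋂ g ∈ E, {x | g x = 0} := by
    intro i
    obtain ⟨E, hE, hFE⟩ := hreg i
    refine ⟨E, fun g hg => ?_, hFE⟩
    obtain ⟨hsmooth, p, q, hq, hpq⟩ := hE g hg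
    exact ⟨hsmooth.continuous, isHereditarilyRational_of_continuous hsmooth.continuous hq hpq⟩
  exact eventuallyConst_atTop.1
    (eventuallyConst_of_antitone_of_hereditarilyRational (hasGenericDensity_eval _) hanti hzero)
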